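/- arXiv:2605.10451 — 2 statements merged into one kernel-verified Lean document; each statement's English description precedes it below -/
import Mathlib

section
/- Let N ≥ 1, M ≥ 1, let R : ZMod N × Fin M → ℂ, and let f : ZMod N → ℂ. If the density is uniform, p(x,m) = 1/M for all x ∈ ZMod N and m ∈ Fin M, then the discrete ABLE layer output g(x) = Σ_{m=1}^{M} √(p(x,m)) · (1/N) Σ_{k} e^{2πi k·x/N} R(k,m) Σ_{z} e^{−2πi k·z/N} √(p(z,m)) f(z) equals (1/M) Σ_{m=1}^{M} Σ_{z ∈ ZMod N} κ_m(x−z) f(z), where κ_m(d) = (1/N) Σ_{k ∈ ZMod N} e^{2πi k·d/N} R(k,m). That is, in the high-temperature (uniform-density) limit the ABLE operator reduces to the average of M Fourier Neural Operator branches. -/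
open Real

/-!
A Fourier multiplier is `ℂ`-linear and, by the convolution theorem, is convolution with the inverse
transform of its symbol. When the density of branch `m` is a constant `w m`, both factors `√(w m)`
of the ABLE layer leave the multiplier and combine to `w m`.
-/

section

open scoped ZMod

variable {N : ℕ} [NeZero N] {E : Type*} [AddCommGroup E] [Module ℂ E]

lemma stdAddChar_mul_eq_exp (k x : ZMod N) :
    ZMod.stdAddChar (k * x) =
      Complex.exp (2 * (π : ℂ) * Complex.I * ((k.val : ℂ) * (x.val : ℂ)) / N) := by
  simpa using ZMod.stdAddChar_coe (N := N) (k.val * x.val)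

lemma dft_eq_sum_exp (f : ZMod N → E) (k : ZMod N) :
    𝓕 f k = ∑ z : ZMod N,
      Complex.exp (-(2 * (π : ℂ) * Complex.I * ((k.val : ℂ) * (z.val : ℂ)) / N)) • f z := by
  simp only [ZMod.dft_apply, mul_comm _ k, AddChar.map_neg_eq_inv, stdAddChar_mul_eq_exp,
    Complex.exp_neg]

lemma invDFT_eq_sum_exp (g : ZMod N → E) (x : ZMod N) :
    𝓕⁻ g x = (N : ℂ)⁻¹ • ∑ k : ZMod N,
      Complex.exp (2 * (π : ℂ) * Complex.I * ((k.val : ℂ) * (x.val : ℂ)) / N) • g k := by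
  simp only [ZMod.invDFT_apply, stdAddChar_mul_eq_exp]

/-- The Fourier multiplier operator with symbol `r`, i.e. one Fourier Neural Operator branch.
Mathlib's `𝓕` is unnormalized and its `𝓕⁻` carries the factor `1 / N`; this gives the same operator
as the unitary normalization by `1 / √N` on each side. -/
noncomputable def fourierMultiplier (r : ZMod N → ℂ) (f : ZMod N → E) : ZMod N → E :=
  𝓕⁻ fun k ↦ r k • 𝓕 f k

lemma fourierMultiplier_const_smul (r : ZMod N → ℂ) (c : ℂ) (f : ZMod N → E) :
    fourierMultiplier r (c • f) = c • fourierMultiplier r f := by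
  rw [fourierMultiplier, fourierMultiplier, ← map_smul 𝓕⁻, map_smul 𝓕]
  congr 1
  funext k
  exact smul_comm (r k) c (𝓕 f k)

theorem fourierMultiplier_eq_convolution (r : ZMod N → ℂ) (f : ZMod N → E) (x : ZMod N) :
    fourierMultiplier r f x = ∑ z : ZMod N, 𝓕⁻ r (x - z) • f z := by
  have char_sub (k z : ZMod N) : (ZMod.stdAddChar (k * (x - z)) : ℂ) =
      ZMod.stdAddChar (k * x) * ZMod.stdAddChar (-(z * k)) := by
    rw [← AddChar.map_add_eq_mul]
    ring_nf
  calc fourierMultiplier r f x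
    _ = (N : ℂ)⁻¹ • ∑ k : ZMod N, ∑ z : ZMod N,
          (ZMod.stdAddChar (k * (x - z)) * r k) • f z := by
      simp only [fourierMultiplier, ZMod.invDFT_apply, ZMod.dft_apply, Finset.smul_sum, smul_smul,
        char_sub, mul_right_comm, mul_assoc]
    _ = ∑ z : ZMod N, 𝓕⁻ r (x - z) • f z := by
      rw [Finset.sum_comm]
      simp only [ZMod.invDFT_apply, smul_eq_mul, mul_smul, Finset.sum_smul, Finset.smul_sum]

/-- The discrete ABLE layer with density `p` and multipliers `R · m`: each branch is weighted by
`√(p · m)` both before and after its Fourier multiplier. -/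
noncomputable def ableLayer {ι : Type*} [Fintype ι] (p : ZMod N → ι → ℝ) (R : ZMod N → ι → ℂ)
    (f : ZMod N → E) (x : ZMod N) : E :=
  ∑ m, (√(p x m) : ℂ) • fourierMultiplier (R · m) (fun z ↦ (√(p z m) : ℂ) • f z) x

theorem able_uniform_density_is_average_fno_general {ι : Type*} [Fintype ι]
    (p : ZMod N → ι → ℝ) (w : ι → ℝ) (hw : ∀ m, 0 ≤ w m) (hp : ∀ x m, p x m = w m)
    (R : ZMod N → ι → ℂ) (f : ZMod N → E) (x : ZMod N) :
    ableLayer p R f x = ∑ m, (w m : ℂ) • ∑ z : ZMod N, 𝓕⁻ (R · m) (x - z) • f z := by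
  have sqrt_mul_sqrt (m : ι) : (√(w m) : ℂ) * √(w m) = w m := by
    rw [← Complex.ofReal_mul, Real.mul_self_sqrt (hw m)]
  unfold ableLayer
  refine Finset.sum_congr rfl fun m _ ↦ ?_
  calc (√(p x m) : ℂ) • fourierMultiplier (R · m) (fun z ↦ (√(p z m) : ℂ) • f z) x
    _ = (√(w m) : ℂ) • fourierMultiplier (R · m) ((√(w m) : ℂ) • f) x := by
      simp only [hp, Pi.smul_def]
    _ = (w m : ℂ) • fourierMultiplier (R · m) f x := by
      rw [fourierMultiplier_const_smul, Pi.smul_apply, smul_smul, sqrt_mul_sqrt]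
    _ = (w m : ℂ) • ∑ z : ZMod N, 𝓕⁻ (R · m) (x - z) • f z := by
      rw [fourierMultiplier_eq_convolution]

end

/-- **High-temperature (uniform-density) limit of the discrete ABLE layer.**
If `p(x,m) = 1/M` for all `x` and `m`, the ABLE layer output reduces to the average
of `M` Fourier Neural Operator branches:
`g(x) = (1/M) Σ_m Σ_z κ_m(x−z) f(z)` with `κ_m(d) = (1/N) Σ_k e^{2πik·d/N} R(k,m)`. -/
theorem able_uniform_density_is_average_fno (N : ℕ) [NeZero N] (M : ℕ) (hM : 1 ≤ M)
    (p : ZMod N → Fin M → ℝ) (hp : ∀ x m, p x m = 1 / M)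
    (R : ZMod N → Fin M → ℂ) (f : ZMod N → ℂ) :
    ∀ x : ZMod N,
      (∑ m : Fin M, (Real.sqrt (p x m) : ℂ) *
        ((N : ℂ)⁻¹ * ∑ k : ZMod N,
          Complex.exp (2 * (π : ℂ) * Complex.I * ((k.val : ℂ) * (x.val : ℂ)) / N) * R k m *
            ∑ z : ZMod N,
              Complex.exp (-(2 * (π : ℂ) * Complex.I * ((k.val : ℂ) * (z.val : ℂ)) / N)) *
                ((Real.sqrt (p z m) : ℂ) * f z)))
      = (M : ℂ)⁻¹ * ∑ m : Fin M, ∑ z : ZMod N,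
          ((N : ℂ)⁻¹ * ∑ k : ZMod N,
            Complex.exp (2 * (π : ℂ) * Complex.I *
              ((k.val : ℂ) * (((x - z : ZMod N).val : ℂ))) / N) * R k m) * f z := by
  intro x
  simpa [ableLayer, fourierMultiplier, dft_eq_sum_exp, invDFT_eq_sum_exp,
    Finset.mul_sum, mul_assoc] using
    able_uniform_density_is_average_fno_general p (fun _ ↦ 1 / M) (fun _ ↦ by positivity) hp R f x
end

section
/- Let M ≥ 1 and let 0 = a_0 < a_1 < … < a_M = 1 be a partition of [0,1]. Let u : ℝ → ℝ be integrable on [0,1], of bounded variation on [0,1], and suppose eVariationOn u [a_{m−1}, a_m] ≤ V/M for each m = 1, …, M, where V ≥ 0. Define the piecewise-constant approximation ũ on [0,1) by ũ(x) = (1/(a_m − a_{m−1})) ∫_{a_{m−1}}^{a_m} u(t) dt for x ∈ [a_{m−1}, a_m). Then ∫_0^1 |u(x) − ũ(x)|² dx ≤ (V/M)², i.e. ‖u − ũ‖_{L²[0,1]} ≤ V/M. Thus an adaptive piecewise-constant representation with M learnable pieces approximates a bounded-variation target at rate O(V/M) in L², compared to the O(V/√K) rate of the K-mode Fourier truncation.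 -/
open Real MeasureTheory

/-!
On each piece, a value of `u` and the average of `u` differ by at most the variation of `u` there:
the closed ball about that value whose radius is the variation is convex and contains all values of
`u` on the piece, hence also their average. So `u - ũ` is bounded uniformly by `V / M`, and
integrating a power of this bound costs only the length of the interval.
-/

lemma exists_mem_Ico_castSucc_succ {α : Type*} [LinearOrder α] {n : ℕ} {a : Fin (n + 1) → α}
    {x : α} (hx : x ∈ Set.Ico (a 0) (a (Fin.last n))) :
    ∃ m : Fin n, x ∈ Set.Ico (a m.castSucc) (a m.succ) := by
  suffices h : ∀ k, x < a k → ∃ m : Fin n, x ∈ Set.Ico (a m.castSucc) (a m.succ) from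
    h (Fin.last n) hx.2
  intro k
  induction k using Fin.induction with
  | zero => exact fun hlt => absurd hx.1 hlt.not_ge
  | succ m ih =>
    intro hlt
    rcases lt_or_ge x (a m.castSucc) with hlt' | hge
    · exact ih hlt'
    · exact ⟨m, hge, hlt⟩

section BanachValued

variable {E : Type*} [NormedAddCommGroup E]

lemma integral_norm_rpow_le_of_norm_le_on_Ico {f : ℝ → E} {a b C p : ℝ} (hab : a ≤ b) (hp : 0 ≤ p)
    (hC : ∀ x ∈ Set.Ico a b, ‖f x‖ ≤ C) :
    ∫ x in a..b, ‖f x‖ ^ p ≤ C ^ p * (b - a) := by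
  have hpow : ∀ x ∈ Set.Ico a b, ‖‖f x‖ ^ p‖ ≤ C ^ p := fun x hx => by
    rw [Real.norm_of_nonneg (by positivity)]
    exact Real.rpow_le_rpow (norm_nonneg _) (hC x hx) hp
  calc ∫ x in a..b, ‖f x‖ ^ p
      = ∫ x in Set.Ico a b, ‖f x‖ ^ p := by
        rw [intervalIntegral.integral_of_le hab, integral_Ico_eq_integral_Ioc]
    _ ≤ ‖∫ x in Set.Ico a b, ‖f x‖ ^ p‖ := le_norm_self _
    _ ≤ C ^ p * volume.real (Set.Ico a b) :=
        norm_setIntegral_le_of_norm_le_const measure_Ico_lt_top hpow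
    _ = C ^ p * (b - a) := by rw [Real.volume_real_Ico_of_le hab]

variable [NormedSpace ℝ E]

lemma edist_setAverage_le_eVariationOn [CompleteSpace E] {α : Type*} [LinearOrder α]
    [MeasurableSpace α] {μ : Measure α} {s t : Set α} {u : α → E} {x : α} (hs : MeasurableSet s)
    (hμ₀ : μ s ≠ 0) (hμ : μ s ≠ ⊤) (hu : IntegrableOn u s μ) (hst : s ⊆ t) (hx : x ∈ t) :
    edist (u x) (⨍ y in s, u y ∂μ) ≤ eVariationOn u t := by
  have hball : ∀ y ∈ s, u y ∈ Metric.closedEBall (u x) (eVariationOn u t) := fun y hy =>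
    eVariationOn.edist_le u (hst hy) hx
  rw [edist_comm]
  exact (convex_closedEBall _ _).set_average_mem Metric.isClosed_closedEBall hμ₀ hμ
    (ae_restrict_of_forall_mem hs hball) hu

/-- The function `ũ` is a piecewise-constant approximation of `u` subordinate to the nodes `a`: on
each half-open piece `[a m, a (m + 1))` it is the average of `u` over that piece. Outside
`[a 0, a n)` the values of `ũ` are unconstrained. -/
def IsPiecewiseAverage {n : ℕ} (a : Fin (n + 1) → ℝ) (u ũ : ℝ → E) : Prop :=
  ∀ m : Fin n, ∀ x ∈ Set.Ico (a m.castSucc) (a m.succ),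
    ũ x = ⨍ t in (a m.castSucc)..(a m.succ), u t

variable [CompleteSpace E] {n : ℕ} {a : Fin (n + 1) → ℝ} {u ũ : ℝ → E}

lemma IsPiecewiseAverage.edist_le (hũ : IsPiecewiseAverage a u ũ) (ha : Monotone a)
    (hu : IntervalIntegrable u volume (a 0) (a (Fin.last n))) {C : ENNReal}
    (hvar : ∀ m : Fin n, eVariationOn u (Set.Icc (a m.castSucc) (a m.succ)) ≤ C)
    {x : ℝ} (hx : x ∈ Set.Ico (a 0) (a (Fin.last n))) :
    edist (u x) (ũ x) ≤ C := by
  obtain ⟨m, hm⟩ := exists_mem_Ico_castSucc_succ hx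
  have hlt : a m.castSucc < a m.succ := hm.1.trans_lt hm.2
  have hpiece : IntegrableOn u (Set.Ioc (a m.castSucc) (a m.succ)) :=
    hu.1.mono_set (Set.Ioc_subset_Ioc (ha (Fin.zero_le _)) (ha (Fin.le_last _)))
  rw [hũ m x hm, Set.uIoc_of_le hlt.le]
  exact (edist_setAverage_le_eVariationOn measurableSet_Ioc (by simpa using hlt)
    measure_Ioc_lt_top.ne hpiece Set.Ioc_subset_Icc_self (Set.Ico_subset_Icc_self hm)).trans
    (hvar m)

theorem piecewise_average_L2_rate_general (ha : Monotone a)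
    (hu : IntervalIntegrable u volume (a 0) (a (Fin.last n))) {ε : ℝ} (hε : 0 ≤ ε)
    (hvar : ∀ m : Fin n,
      eVariationOn u (Set.Icc (a m.castSucc) (a m.succ)) ≤ ENNReal.ofReal ε)
    (hũ : IsPiecewiseAverage a u ũ) {p : ℝ} (hp : 0 ≤ p) :
    ∫ x in (a 0)..(a (Fin.last n)), ‖u x - ũ x‖ ^ p ≤ ε ^ p * (a (Fin.last n) - a 0) := by
  refine integral_norm_rpow_le_of_norm_le_on_Ico (ha (Fin.zero_le _)) hp fun x hx => ?_
  rw [← dist_eq_norm, ← edist_le_ofReal hε]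
  exact hũ.edist_le ha hu hvar hx

end BanachValued

/-- **`L²` rate of adaptive piecewise-constant approximation of a BV function.**
Let `0 = a_0 < a_1 < … < a_M = 1` be a partition of `[0,1]` and let `u` be
integrable and of bounded variation on `[0,1]` with
`eVariationOn u [a_{m-1}, a_m] ≤ V/M` on each piece.  If `ũ` equals, on each
`[a_{m-1}, a_m)`, the average of `u` over that piece, then
`∫_0^1 |u − ũ|² ≤ (V/M)²`, i.e. `‖u − ũ‖_{L²[0,1]} ≤ V/M`:  an adaptive
piecewise-constant representation with `M` learnable pieces achieves rate `O(V/M)`. -/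
theorem piecewise_average_L2_rate (M : ℕ) (hM : 1 ≤ M)
    (a : Fin (M + 1) → ℝ) (ha0 : a 0 = 0) (haM : a (Fin.last M) = 1)
    (hmono : StrictMono a)
    (u : ℝ → ℝ)
    (hint : IntervalIntegrable u volume 0 1)
    (hbv : BoundedVariationOn u (Set.Icc 0 1))
    (V : ℝ) (hV : 0 ≤ V)
    (hpiece : ∀ m : Fin M,
      eVariationOn u (Set.Icc (a m.castSucc) (a m.succ)) ≤ ENNReal.ofReal (V / M))
    (ut : ℝ → ℝ)
    (hut : ∀ m : Fin M, ∀ x ∈ Set.Ico (a m.castSucc) (a m.succ),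
      ut x = (1 / (a m.succ - a m.castSucc)) * ∫ t in (a m.castSucc)..(a m.succ), u t) :
    ∫ x in (0:ℝ)..1, |u x - ut x| ^ 2 ≤ (V / M) ^ 2 := by
  have hut_avg : IsPiecewiseAverage a u ut := fun m x hx => by
    rw [hut m x hx, interval_average_eq, one_div, smul_eq_mul]
  simpa [ha0, haM] using piecewise_average_L2_rate_general hmono.monotone
    (by rwa [ha0, haM]) (by positivity) hpiece hut_avg zero_le_two
end
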